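/- arXiv:1808.01823 — 2 statements merged into one kernel-verified Lean document; each statement's English description precedes it below -/
import Mathlib

section
/- Let A = M_{n_1}(ℂ) × ⋯ × M_{n_k}(ℂ) with coordinatewise operations, and suppose a = (a_1, …, a_k) ∈ A is a maximal finite-rank element of A, i.e. #σ'(xa) ≤ #σ'(a) for all x ∈ A. Then for each j ∈ {1, …, k}, the component a_j is a maximal finite-rank element of M_{n_j}(ℂ): #σ'(y a_j) ≤ #σ'(a_j) for every y ∈ M_{n_j}(ℂ). -/
/-!
Replace the `j`-th coordinate of `a` by `r • (y * a j)`, which amounts to a left multiplication.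
Writing `σ'` for the nonzero spectrum, `r • σ'(y * a j)` avoids the finite set
`S = ⋃ i ≠ j, σ'(a i)` for all but finitely many scalars `r`, so maximality of `a` gives
`#S + #σ'(y * a j) ≤ #σ'(a) ≤ #S + #σ'(a j)`, and `#S` cancels.
-/

open scoped Pointwise

theorem exists_units_disjoint_smul {G₀ : Type*} [GroupWithZero G₀] [Infinite G₀] {S T : Set G₀}
    (hS : S.Finite) (hT : T.Finite) (hT0 : (0 : G₀) ∉ T) : ∃ r : G₀ˣ, Disjoint S (r • T) := by
  obtain ⟨r, hr⟩ := ((hS.div hT).insert 0).exists_notMem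
  obtain ⟨hr0, hr_div⟩ := not_or.1 (Set.mem_insert_iff.not.1 hr)
  refine ⟨Units.mk0 r hr0, Set.disjoint_right.2 ?_⟩
  rintro _ ⟨t, ht, rfl⟩ hrt
  exact hr_div ⟨r * t, hrt, t, ht, mul_div_cancel_right₀ r (ne_of_mem_of_not_mem ht hT0)⟩

/-- The set `σ'(a)` of nonzero spectral values of `a`. -/
def nonzeroSpectrum (R : Type*) {A : Type*} [CommSemiring R] [Ring A] [Algebra R A] (a : A) :
    Set R :=
  spectrum R a \ {0}

/-- Maximal finite-rank elements: `σ'(a)` is finite and `#σ'(x * a) ≤ #σ'(a)` for all `x`.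
Cardinalities are taken in `ℕ∞`, so the inequality makes every `σ'(x * a)` finite. -/
structure IsMaximalFiniteRank (R : Type*) {A : Type*} [CommSemiring R] [Ring A] [Algebra R A]
    (a : A) : Prop where
  finite_nonzeroSpectrum : (nonzeroSpectrum R a).Finite
  encard_nonzeroSpectrum_mul_le (x : A) :
    (nonzeroSpectrum R (x * a)).encard ≤ (nonzeroSpectrum R a).encard

section CommSemiring

variable {R : Type*} [CommSemiring R]

theorem nonzeroSpectrum_units_smul {A : Type*} [Ring A] [Algebra R A] (r : Rˣ) (a : A) :
    nonzeroSpectrum R (r • a) = r • nonzeroSpectrum R a := by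
  simp only [nonzeroSpectrum, spectrum.unit_smul_eq_smul, Set.smul_set_sdiff,
    Set.smul_set_singleton, smul_zero]

variable {ι : Type*} {A : ι → Type*} [∀ i, Ring (A i)] [∀ i, Algebra R (A i)]

theorem nonzeroSpectrum_pi (a : ∀ i, A i) :
    nonzeroSpectrum R a = ⋃ i, nonzeroSpectrum R (a i) := by
  simp only [nonzeroSpectrum, Pi.spectrum_eq, Set.iUnion_sdiff]

variable [DecidableEq ι]

theorem nonzeroSpectrum_update (a : ∀ i, A i) (j : ι) (b : A j) :
    nonzeroSpectrum R (Function.update a j b) =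
      (⋃ i ≠ j, nonzeroSpectrum R (a i)) ∪ nonzeroSpectrum R b := by
  have off_j : ⋃ i ≠ j, nonzeroSpectrum R (Function.update a j b i) =
      ⋃ i ≠ j, nonzeroSpectrum R (a i) :=
    Set.iUnion₂_congr fun i hi => by rw [Function.update_of_ne hi]
  calc nonzeroSpectrum R (Function.update a j b)
      = nonzeroSpectrum R (Function.update a j b j) ∪
          ⋃ i ≠ j, nonzeroSpectrum R (Function.update a j b i) :=
        (nonzeroSpectrum_pi _).trans (iSup_split_single _ j)
    _ = (⋃ i ≠ j, nonzeroSpectrum R (a i)) ∪ nonzeroSpectrum R b := by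
        rw [off_j, Function.update_self, Set.union_comm]

theorem IsMaximalFiniteRank.encard_nonzeroSpectrum_update_mul_le {a : ∀ i, A i}
    (ha : IsMaximalFiniteRank R a) (j : ι) (y : A j) :
    (nonzeroSpectrum R (Function.update a j (y * a j))).encard ≤
      (nonzeroSpectrum R a).encard := by
  have mul_eq_update : Function.update (1 : ∀ i, A i) j y * a = Function.update a j (y * a j) := by
    simpa using (Function.update_mul (1 : ∀ i, A i) a j y (a j)).symm
  exact mul_eq_update ▸ ha.encard_nonzeroSpectrum_mul_le (Function.update 1 j y)

end CommSemiring

theorem exists_encard_nonzeroSpectrum_update_smul {K ι : Type*} [Semifield K] [Infinite K]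
    [DecidableEq ι] {A : ι → Type*} [∀ i, Ring (A i)] [∀ i, Algebra K (A i)] {a : ∀ i, A i}
    {j : ι} {b : A j} (ha : (⋃ i ≠ j, nonzeroSpectrum K (a i)).Finite)
    (hb : (nonzeroSpectrum K b).Finite) :
    ∃ r : Kˣ, (nonzeroSpectrum K (Function.update a j (r • b))).encard =
      (⋃ i ≠ j, nonzeroSpectrum K (a i)).encard + (nonzeroSpectrum K b).encard := by
  obtain ⟨r, hr⟩ := exists_units_disjoint_smul ha hb fun h => h.2 rfl
  use r
  rw [nonzeroSpectrum_update, nonzeroSpectrum_units_smul, Set.encard_union_eq hr,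
    Set.encard_smul_set]

theorem components_maximal_general {K ι : Type*} [Semifield K] [Infinite K] {A : ι → Type*}
    [∀ i, Ring (A i)] [∀ i, Algebra K (A i)] {a : ∀ i, A i} (ha : IsMaximalFiniteRank K a)
    (j : ι) : IsMaximalFiniteRank K (a j) := by
  classical
  set S := ⋃ i ≠ j, nonzeroSpectrum K (a i)
  have ha_union : nonzeroSpectrum K a = S ∪ nonzeroSpectrum K (a j) := by
    simpa using nonzeroSpectrum_update a j (a j)
  obtain ⟨hS, hj⟩ := Set.finite_union.1 (ha_union ▸ ha.finite_nonzeroSpectrum)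
  refine ⟨hj, fun y => ?_⟩
  have hy : (nonzeroSpectrum K (Function.update a j (y * a j))).Finite :=
    ha.finite_nonzeroSpectrum.finite_of_encard_le (ha.encard_nonzeroSpectrum_update_mul_le j y)
  rw [nonzeroSpectrum_update, Set.finite_union] at hy
  obtain ⟨r, hr⟩ := exists_encard_nonzeroSpectrum_update_smul hS hy.2
  rw [← ENat.add_le_add_iff_left hS.encard_lt_top.ne]
  calc S.encard + (nonzeroSpectrum K (y * a j)).encard
      = (nonzeroSpectrum K (Function.update a j (r • y * a j))).encard := by
        rw [smul_mul_assoc, hr]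
    _ ≤ (nonzeroSpectrum K a).encard := ha.encard_nonzeroSpectrum_update_mul_le j (r • y)
    _ ≤ S.encard + (nonzeroSpectrum K (a j)).encard := by
        rw [ha_union]
        exact Set.encard_union_le _ _

/-- If `a = (a_1, …, a_k)` is a maximal finite-rank element of the product of
matrix algebras `A = M_{n_1}(ℂ) × ⋯ × M_{n_k}(ℂ)`, then each component `a_j` is a maximal
finite-rank element of `M_{n_j}(ℂ)`. -/
theorem components_maximal (k : ℕ) (hk : 0 < k) (n : Fin k → ℕ) (hn : ∀ j, 0 < n j)
    (a : ∀ j, Matrix (Fin (n j)) (Fin (n j)) ℂ)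
    (hmax : ∀ x : ∀ j, Matrix (Fin (n j)) (Fin (n j)) ℂ,
      (spectrum ℂ (x * a) \ {0}).encard ≤ (spectrum ℂ a \ {0}).encard)
    (j : Fin k) (y : Matrix (Fin (n j)) (Fin (n j)) ℂ) :
    (spectrum ℂ (y * a j) \ {0}).encard ≤ (spectrum ℂ (a j) \ {0}).encard := by
  have ha : (spectrum ℂ a).Finite :=
    Pi.spectrum_eq (R := ℂ) a ▸ Set.finite_iUnion fun i => (a i).finite_spectrum
  exact (components_maximal_general ⟨ha.sdiff, hmax⟩ j).encard_nonzeroSpectrum_mul_le y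
end

section
/- Let A = M_{n_1}(ℂ) × ⋯ × M_{n_k}(ℂ) with coordinatewise operations, and suppose a ∈ A is invertible and is a maximal finite-rank element of A, i.e. #σ'(xa) ≤ #σ'(a) for all x ∈ A. Then ∏_{α ∈ σ(a)} (a − α·1) = 0, where 1 denotes the identity of A. (This is the Generalized Cayley–Hamilton Theorem for an invertible maximal finite-rank element of a finite-dimensional semisimple algebra, where the generalized characteristic polynomial has only simple roots.) -/
/-!
Right multiplication by a unit is onto, so a maximal unit `a` has at least as many distinct nonzero
spectral values as any other tuple, in particular as a tuple of diagonal matrices whose entries are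
all nonzero and pairwise distinct. Hence `a` has as many distinct spectral values as the degree of
the product of the characteristic polynomials of its components. That product then has only simple
roots, so it equals `∏_{α ∈ σ(a)} (X - α)`, and the Cayley–Hamilton theorem applies to each
component.
-/

open Polynomial

theorem finprod_X_sub_C_rootSet_eq_of_monic {R : Type*} [CommRing R] [IsDomain R] {p : R[X]}
    (hp : p.Monic) (hcard : (p.natDegree : ℕ∞) ≤ (p.rootSet R).encard) :
    ∏ᶠ α ∈ p.rootSet R, (X - C α) = p := by
  classical
  have hset : p.rootSet R = (p.roots.toFinset : Set R) := by
    rw [rootSet_def, aroots_def, Algebra.algebraMap_self, map_id]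
  rw [hset, Set.encard_coe_eq_coe_finsetCard, Nat.cast_le] at hcard
  have hle : p.roots.toFinset.card ≤ p.roots.card := p.roots.toFinset_card_le
  have hroots : p.roots.card = p.natDegree := p.card_roots'.antisymm (hcard.trans hle)
  have hnodup : p.roots.Nodup :=
    Multiset.toFinset_card_eq_card_iff_nodup.mp (hle.antisymm (hroots.trans_le hcard))
  rw [hset, finprod_mem_coe_finset, Finset.prod_eq_multiset_prod, Multiset.toFinset_val,
    hnodup.dedup, prod_multiset_X_sub_C_of_monic_of_roots_card_eq hp hroots]

theorem encard_spectrum_sdiff_zero_le_of_isUnit {R A : Type*} [CommSemiring R] [Ring A]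
    [Algebra R A] {a : A} (ha : IsUnit a)
    (hmax : ∀ x : A, (spectrum R (x * a) \ {0}).encard ≤ (spectrum R a \ {0}).encard) (y : A) :
    (spectrum R y \ {0}).encard ≤ (spectrum R a \ {0}).encard := by
  obtain ⟨b, hba⟩ := ha.exists_left_inv
  simpa only [mul_assoc, hba, mul_one] using hmax (y * b)

section PiMatrix

variable {ι : Type*} {m : ι → Type*} [∀ j, Fintype (m j)] [∀ j, DecidableEq (m j)]

theorem spectrum_pi_diagonal {K : Type*} [Field K] (d : (Σ j, m j) → K) :
    spectrum K (fun j => Matrix.diagonal fun i => d ⟨j, i⟩ : ∀ j, Matrix (m j) (m j) K) =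
      Set.range d := by
  simp only [Pi.spectrum_eq, spectrum_diagonal, Set.range_sigma_eq_iUnion_range]

section Fintype

variable [Fintype ι]

/-- The characteristic polynomial of an element of a finite product of matrix algebras: the product
of the characteristic polynomials of its components, which is also that of the block diagonal
matrix they form. -/
noncomputable def piCharpoly {R : Type*} [CommRing R] (a : ∀ j, Matrix (m j) (m j) R) : R[X] :=
  ∏ j, (a j).charpoly

section CommRing

variable {R : Type*} [CommRing R] (a : ∀ j, Matrix (m j) (m j) R)

theorem piCharpoly_monic : (piCharpoly a).Monic :=
  monic_prod_of_monic _ _ fun j _ => (a j).charpoly_monic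

theorem natDegree_piCharpoly [Nontrivial R] :
    (piCharpoly a).natDegree = ∑ j, Fintype.card (m j) := by
  rw [piCharpoly, natDegree_prod_of_monic _ _ fun j _ => (a j).charpoly_monic]
  simp only [Matrix.charpoly_natDegree_eq_dim]

theorem aeval_self_piCharpoly : aeval a (piCharpoly a) = 0 := by
  funext j
  rw [aeval_pi_apply₂]
  exact aeval_eq_zero_of_dvd_aeval_eq_zero
    (Finset.dvd_prod_of_mem (fun j => (a j).charpoly) (Finset.mem_univ j))
    (a j).aeval_self_charpoly

end CommRing

section Field

variable {K : Type*} [Field K]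

theorem spectrum_eq_rootSet_piCharpoly (a : ∀ j, Matrix (m j) (m j) K) :
    spectrum K a = (piCharpoly a).rootSet K := by
  ext α
  rw [(piCharpoly_monic a).mem_rootSet, coe_aeval_eq_eval, piCharpoly, eval_prod,
    Finset.prod_eq_zero_iff]
  simp only [Pi.spectrum_eq, Set.mem_iUnion, Matrix.mem_spectrum_iff_isRoot_charpoly, IsRoot.def,
    Finset.mem_univ, true_and]

theorem finprod_X_sub_C_spectrum_eq_piCharpoly {a : ∀ j, Matrix (m j) (m j) K}
    (hcard : (∑ j, Fintype.card (m j) : ℕ) ≤ (spectrum K a).encard) :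
    ∏ᶠ α ∈ spectrum K a, (X - C α) = piCharpoly a := by
  rw [← natDegree_piCharpoly a, spectrum_eq_rootSet_piCharpoly] at hcard
  rw [spectrum_eq_rootSet_piCharpoly,
    finprod_X_sub_C_rootSet_eq_of_monic (piCharpoly_monic a) hcard]

variable (K m) in
theorem exists_encard_spectrum_sdiff_zero_eq_sum_card [Infinite K] :
    ∃ y : ∀ j, Matrix (m j) (m j) K,
      (spectrum K y \ {0}).encard = (∑ j, Fintype.card (m j) : ℕ) := by
  have hinf : ({0}ᶜ : Set K).Infinite := (Set.finite_singleton 0).infinite_compl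
  let d : (Σ j, m j) ↪ ({0}ᶜ : Set K) :=
    (Fintype.equivFin (Σ j, m j)).toEmbedding.trans (Fin.valEmbedding.trans hinf.natEmbedding)
  have hinj : Function.Injective fun s => (d s : K) := Subtype.val_injective.comp d.injective
  have hzero : (0 : K) ∉ Set.range fun s => (d s : K) := by
    rintro ⟨s, hs⟩
    exact (d s).property hs
  refine ⟨fun j => Matrix.diagonal fun i => (d ⟨j, i⟩ : K), ?_⟩
  rw [spectrum_pi_diagonal fun s => (d s : K), Set.sdiff_singleton_eq_self hzero, ← Set.image_univ,
    hinj.encard_image, Set.encard_univ, ENat.card_eq_coe_fintype_card, Fintype.card_sigma]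

end Field

end Fintype

theorem cayley_hamilton_product_general [Finite ι] {K : Type*} [Field K] [Infinite K]
    {a : ∀ j, Matrix (m j) (m j) K} (ha : IsUnit a)
    (hmax : ∀ x : ∀ j, Matrix (m j) (m j) K,
      (spectrum K (x * a) \ {0}).encard ≤ (spectrum K a \ {0}).encard) :
    aeval a (∏ᶠ α ∈ spectrum K a, (X - C α)) = 0 := by
  have := Fintype.ofFinite ι
  obtain ⟨y, hy⟩ := exists_encard_spectrum_sdiff_zero_eq_sum_card m K
  have hcard : (∑ j, Fintype.card (m j) : ℕ) ≤ (spectrum K a).encard :=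
    calc ((∑ j, Fintype.card (m j) : ℕ) : ℕ∞)
      _ = (spectrum K y \ {0}).encard := hy.symm
      _ ≤ (spectrum K a \ {0}).encard := encard_spectrum_sdiff_zero_le_of_isUnit ha hmax y
      _ ≤ (spectrum K a).encard := Set.encard_le_encard Set.sdiff_subset
  rw [finprod_X_sub_C_spectrum_eq_piCharpoly hcard, aeval_self_piCharpoly]

end PiMatrix

/-- Generalized Cayley–Hamilton for an invertible maximal finite-rank element
of a product of matrix algebras: `∏_{α ∈ σ(a)} (a − α·1) = 0`. -/
theorem cayley_hamilton_product (k : ℕ) (hk : 0 < k) (n : Fin k → ℕ) (hn : ∀ j, 0 < n j)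
    (a : ∀ j, Matrix (Fin (n j)) (Fin (n j)) ℂ) (ha : IsUnit a)
    (hmax : ∀ x : ∀ j, Matrix (Fin (n j)) (Fin (n j)) ℂ,
      (spectrum ℂ (x * a) \ {0}).encard ≤ (spectrum ℂ a \ {0}).encard) :
    Polynomial.aeval a (∏ᶠ α ∈ spectrum ℂ a, (Polynomial.X - Polynomial.C α)) = 0 :=
  cayley_hamilton_product_general ha hmax
end
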